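/- Let (p_i, ρ_i)_{i=1}^m be a linearly independent (LI) ensemble on ℂ^n. An m-element POVM (Π_i) maximizes the success probability ∑_{i=1}^m p_i Tr(ρ_i Π_i) over all m-element POVMs if and only if (Π_i) is a projective measurement and Z = ∑_{i=1}^m p_i ρ_i Π_i is positive definite. -/

import Mathlib

open Matrix
open scoped ComplexOrder

noncomputable section

/-- Rank-one outer product `x x*` as an `n × n` complex matrix. -/
def outer {n : ℕ} (x : Fin n → ℂ) : Matrix (Fin n) (Fin n) ℂ :=
  Matrix.vecMulVec x (star x)

/-- A POVM indexed by `ι`: positive semidefinite elements summing to the identity. -/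
def IsPOVM {ι : Type} [Fintype ι] {n : ℕ} (E : ι → Matrix (Fin n) (Fin n) ℂ) : Prop :=
  (∀ i, (E i).PosSemidef) ∧ ∑ i, E i = 1

/-- Success probability of the POVM `E` for the ensemble `(p, ρ)`. -/
def succProb {ι : Type} [Fintype ι] {n : ℕ} (p : ι → ℝ)
    (ρ E : ι → Matrix (Fin n) (Fin n) ℂ) : ℝ :=
  ∑ i, p i * ((ρ i * E i).trace).re

/-- `P` is a POVM maximizing the success probability for the ensemble `(p, ρ)`. -/
def IsOptimal {ι : Type} [Fintype ι] {n : ℕ} (p : ι → ℝ)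
    (ρ P : ι → Matrix (Fin n) (Fin n) ℂ) : Prop :=
  IsPOVM P ∧ ∀ E, IsPOVM E → succProb p ρ E ≤ succProb p ρ P

/-- An ensemble of states: positive probabilities summing to 1, states positive
semidefinite of trace 1. -/
def IsEnsemble {ι : Type} [Fintype ι] {n : ℕ} (p : ι → ℝ)
    (ρ : ι → Matrix (Fin n) (Fin n) ℂ) : Prop :=
  (∀ i, 0 < p i) ∧ ∑ i, p i = 1 ∧ (∀ i, (ρ i).PosSemidef) ∧ ∀ i, (ρ i).trace = 1

/-- A linearly independent (LI) ensemble: the ranks sum to `n` and the column spaces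
of the states together span `ℂ^n`. -/
def IsLIEnsemble {ι : Type} [Fintype ι] {n : ℕ} (p : ι → ℝ)
    (ρ : ι → Matrix (Fin n) (Fin n) ℂ) : Prop :=
  IsEnsemble p ρ ∧ (∑ i, (ρ i).rank = n) ∧
    (⨆ i, LinearMap.range (ρ i).mulVecLin) = ⊤

/-- A projective measurement: mutually orthogonal Hermitian idempotents summing to
the identity. -/
def IsProjectiveMeasurement {ι : Type} [Fintype ι] {n : ℕ}
    (P : ι → Matrix (Fin n) (Fin n) ℂ) : Prop :=
  (∀ i j, i ≠ j → P i * P j = 0) ∧ (∀ i, P i * P i = P i) ∧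
    (∀ i, (P i).IsHermitian) ∧ ∑ i, P i = 1

/-- The pretty good measurement of the ensemble `(q, σ)` (with elements
`S^{-1/2} qᵢσᵢ S^{-1/2}`, `S = ∑ qⱼσⱼ`, `S^{1/2}` the unique positive definite square
root of `S`) is an optimal POVM for the minimum error discrimination of `(p, ρ)`. -/
def PGMIsOptimal {m n : ℕ} (q : Fin m → ℝ) (σ : Fin m → Matrix (Fin n) (Fin n) ℂ)
    (p : Fin m → ℝ) (ρ : Fin m → Matrix (Fin n) (Fin n) ℂ) : Prop :=
  ∀ R : Matrix (Fin n) (Fin n) ℂ, R.PosDef → R * R = ∑ j, (q j : ℂ) • σ j →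
    IsOptimal p ρ (fun i => R⁻¹ * ((q i : ℂ) • σ i) * R⁻¹)

/-!
Write `A i = pᵢρᵢ` and `Z = ∑ A i * P i`. Discrimination is a semidefinite program: a Hermitian
`H` with `A i ≤ H` for all `i` bounds every success probability by `tr H`. Conversely, if `P` is
optimal, differentiating along the POVMs obtained by sandwiching every element with `1 - ε x x*`
and giving the lost weight to outcome `k` shows that the Hermitian part of `Z` dominates `A k`.
Equality in the duality bound then forces `Z * P k = A k * P k`, so that `Z` is itself Hermitian.

For a linearly independent ensemble, `Z` dominates all the `A i`, whose ranges span, so it is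
positive definite; hence `rank (P i) ≤ rank (A i)`, the ranks of the `P i` add up to the dimension,
and a resolution of the identity with that property consists of orthogonal idempotents. Conversely,
if `P` is projective and `Z` is positive definite, then `Z * P i = A i * P i` and
`rank (P i) = rank (A i)` give an `X` with `Z * X = A i = A i * X`, and
`Z - A i = (1 - X)ᴴ * Z * (1 - X)` is positive semidefinite.
-/

open Filter Topology

section Rank

variable {K V ι d : Type*} [Fintype ι]

section LinearMap

variable [DivisionRing K] [AddCommGroup V] [Module K V] {P : ι → Module.End K V}

lemma lsum_subtype_range_surjective [DecidableEq ι] (hP : ∑ i, P i = 1) :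
    Function.Surjective
      (LinearMap.lsum K _ ℕ fun i => (LinearMap.range (P i)).subtype) := by
  intro x
  refine ⟨fun i => ⟨P i x, x, rfl⟩, ?_⟩
  simpa [LinearMap.lsum_apply] using LinearMap.congr_fun hP x

variable [FiniteDimensional K V]

lemma finrank_le_sum_finrank_range (hP : ∑ i, P i = 1) :
    Module.finrank K V ≤ ∑ i, Module.finrank K (LinearMap.range (P i)) := by
  classical
  rw [← Module.finrank_pi_fintype]
  exact LinearMap.finrank_le_finrank_of_surjective (lsum_subtype_range_surjective hP)

theorem completeOrthogonalIdempotents_of_sum_finrank_range_le (hP : ∑ i, P i = 1)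
    (hrank : ∑ i, Module.finrank K (LinearMap.range (P i)) ≤ Module.finrank K V) :
    CompleteOrthogonalIdempotents P := by
  classical
  have hinj : Function.Injective
      (LinearMap.lsum K _ ℕ fun i => (LinearMap.range (P i)).subtype) := by
    rw [LinearMap.injective_iff_surjective_of_finrank_eq_finrank]
    · exact lsum_subtype_range_surjective hP
    · rw [Module.finrank_pi_fintype]
      exact hrank.antisymm (finrank_le_sum_finrank_range hP)
  -- `P j x` decomposes both as itself and as `∑ i, P i (P j x)`.
  have hmul (i j : ι) (x : V) : P i (P j x) = if i = j then P j x else 0 := by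
    have hdecomp : (fun i => ⟨P i (P j x), P j x, rfl⟩ : (i : ι) → LinearMap.range (P i)) =
        Pi.single j ⟨P j x, x, rfl⟩ := by
      apply hinj
      rw [LinearMap.lsum_piSingle]
      simpa [LinearMap.lsum_apply] using LinearMap.congr_fun hP (P j x)
    have hi := congrArg Subtype.val (congrFun hdecomp i)
    obtain rfl | hij := eq_or_ne i j
    · simpa using hi
    · simpa [hij] using hi
  refine ⟨⟨fun i => ?_, fun i j hij => ?_⟩, hP⟩
  · ext x
    simp [hmul]
  · ext x
    simp [hmul, hij]

end LinearMap

variable [Field K] [Fintype d] [DecidableEq d] {A P : ι → Matrix d d K} {Z : Matrix d d K}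

lemma card_le_sum_rank (hP : ∑ i, P i = 1) : Fintype.card d ≤ ∑ i, (P i).rank := by
  rw [← Module.finrank_fintype_fun_eq_card K]
  exact finrank_le_sum_finrank_range (P := fun i => Matrix.toLinAlgEquiv' (P i))
    (by rw [← map_sum, hP, map_one])

theorem completeOrthogonalIdempotents_of_sum_rank_le (hP : ∑ i, P i = 1)
    (hrank : ∑ i, (P i).rank ≤ Fintype.card d) : CompleteOrthogonalIdempotents P := by
  rw [← Module.finrank_fintype_fun_eq_card K] at hrank
  rw [← CompleteOrthogonalIdempotents.map_injective_iff
    (Matrix.toLinAlgEquiv' : Matrix d d K ≃ₐ[K] _).toRingEquiv.toRingHom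
    Matrix.toLinAlgEquiv'.injective]
  exact completeOrthogonalIdempotents_of_sum_finrank_range_le
    (P := fun i => Matrix.toLinAlgEquiv' (P i)) (by rw [← map_sum, hP, map_one]) hrank

lemma rank_eq_of_mul_eq_mul (hP : ∑ i, P i = 1) (hA : ∑ i, (A i).rank ≤ Fintype.card d)
    (hZ : IsUnit Z) (hZP : ∀ i, Z * P i = A i * P i) (i : ι) : (P i).rank = (A i).rank := by
  have hle (i : ι) : (P i).rank ≤ (A i).rank := by
    rw [← rank_mul_eq_right_of_isUnit_det Z (P i) ((isUnit_iff_isUnit_det Z).1 hZ), hZP]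
    exact rank_mul_le_left _ _
  have hsum : ∑ i, (P i).rank = ∑ i, (A i).rank :=
    (Finset.sum_le_sum fun i _ => hle i).antisymm (hA.trans (card_le_sum_rank hP))
  exact (Finset.sum_eq_sum_iff_of_le fun i _ => hle i).1 hsum i (Finset.mem_univ i)

end Rank

lemma exists_mul_mul_eq_of_rank_mul_eq {K l m n : Type*} [Field K] [Finite l] [Fintype m]
    [Fintype n] {A : Matrix l m K} {B : Matrix m n K} (h : (A * B).rank = A.rank) :
    ∃ Y : Matrix n m K, A * B * Y = A := by
  classical
  have hrange : LinearMap.range (A * B).mulVecLin = LinearMap.range A.mulVecLin :=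
    Submodule.eq_of_le_of_finrank_eq
      (by rw [mulVecLin_mul]; exact LinearMap.range_comp_le_range _ _) h
  have hcol (j : m) : ∃ y, (A * B) *ᵥ y = A.col j := by
    have : A.col j ∈ LinearMap.range (A * B).mulVecLin :=
      hrange ▸ ⟨Pi.single j 1, mulVec_single_one A j⟩
    exact this
  choose y hy using hcol
  exact ⟨(Matrix.of y)ᵀ, Matrix.ext fun i j => congrFun (hy j) i⟩

lemma sum_mul_mul_of_orthogonalIdempotents {R ι : Type*} [Semiring R] [Fintype ι] {P : ι → R}
    (hP : OrthogonalIdempotents P) (A : ι → R) (k : ι) : (∑ i, A i * P i) * P k = A k * P k := by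
  classical
  simp only [Finset.sum_mul, mul_assoc, hP.mul_eq, mul_ite, mul_zero, Finset.sum_ite_eq',
    Finset.mem_univ, if_true]

lemma one_sub_smul_mul_self {R : Type*} [Ring R] [Algebra ℝ R] (x : R) (ε : ℝ) :
    (1 - ε • x) * (1 - ε • x) = 1 - ((2 * ε) • x - ε ^ 2 • (x * x)) := by
  simp only [sub_mul, mul_sub, one_mul, mul_one, smul_mul_assoc, mul_smul_comm]
  module

lemma nonpos_of_eventually_mul_add_sq_mul_nonpos {L C : ℝ}
    (h : ∀ᶠ ε : ℝ in 𝓝[>] 0, ε * L + ε ^ 2 * C ≤ 0) : L ≤ 0 := by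
  have hlim : Tendsto (fun ε : ℝ => L + ε * C) (𝓝[>] 0) (𝓝 L) :=
    tendsto_nhdsWithin_of_tendsto_nhds (Continuous.tendsto' (by fun_prop) _ _ (by simp))
  refine le_of_tendsto hlim ?_
  filter_upwards [h, self_mem_nhdsWithin] with ε hε hpos
  refine nonpos_of_mul_nonpos_right (a := ε) ?_ hpos
  linarith

section PosSemidef

variable {𝕜 ι d : Type*} [RCLike 𝕜] [Fintype d] {A B P X Z : Matrix d d 𝕜}

open scoped MatrixOrder

lemma re_trace_conjTranspose (A : Matrix d d 𝕜) : RCLike.re Aᴴ.trace = RCLike.re A.trace := by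
  rw [trace_conjTranspose, RCLike.star_def, RCLike.conj_re]

lemma re_trace_mul_mul_right_comm (hA : A.IsHermitian)
    (hP : P.IsHermitian) (hX : X.IsHermitian) :
    RCLike.re (A * X * P).trace = RCLike.re (A * P * X).trace := by
  rw [← re_trace_conjTranspose, conjTranspose_mul, conjTranspose_mul, hA.eq, hP.eq, hX.eq,
    ← Matrix.mul_assoc, trace_mul_comm, ← Matrix.mul_assoc]

lemma re_trace_selfAdjointPart_mul (Z : Matrix d d 𝕜) (hX : X.IsHermitian) :
    RCLike.re ((selfAdjointPart ℝ Z : Matrix d d 𝕜) * X).trace = RCLike.re (Z * X).trace := by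
  have hconj : RCLike.re (Zᴴ * X).trace = RCLike.re (Z * X).trace := by
    rw [← re_trace_conjTranspose, conjTranspose_mul, conjTranspose_conjTranspose, hX.eq,
      trace_mul_comm]
  rw [selfAdjointPart_apply_coe, star_eq_conjTranspose, smul_mul_assoc, trace_smul,
    RCLike.smul_re, Matrix.add_mul, trace_add, map_add, hconj, invOf_eq_inv]
  ring

lemma trace_mul_nonneg_of_posSemidef (hA : A.PosSemidef) (hB : B.PosSemidef) :
    0 ≤ (A * B).trace := by
  classical
  obtain ⟨C, rfl⟩ := CStarAlgebra.nonneg_iff_eq_star_mul_self.1 hA.nonneg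
  rw [Matrix.mul_assoc, trace_mul_comm]
  exact (hB.mul_mul_conjTranspose_same C).trace_nonneg

lemma mul_eq_zero_of_trace_mul_eq_zero (hA : A.PosSemidef) (hB : B.PosSemidef)
    (h : (A * B).trace = 0) : A * B = 0 := by
  classical
  obtain ⟨C, rfl⟩ := CStarAlgebra.nonneg_iff_eq_star_mul_self.1 hA.nonneg
  obtain ⟨D, rfl⟩ := CStarAlgebra.nonneg_iff_eq_star_mul_self.1 hB.nonneg
  simp only [star_eq_conjTranspose] at h ⊢
  have hCD : C * Dᴴ = 0 := by
    rw [← trace_mul_conjTranspose_self_eq_zero_iff, ← h, Matrix.mul_assoc Cᴴ,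
      trace_mul_comm Cᴴ]
    simp only [conjTranspose_mul, conjTranspose_conjTranspose, Matrix.mul_assoc]
  rw [Matrix.mul_assoc, ← Matrix.mul_assoc C, hCD, Matrix.zero_mul, Matrix.mul_zero]

lemma trace_mul_vecMulVec_star (A : Matrix d d 𝕜) (x : d → 𝕜) :
    (A * vecMulVec x (star x)).trace = star x ⬝ᵥ (A *ᵥ x) := by
  rw [mul_vecMulVec, trace_vecMulVec, dotProduct_comm]

lemma exists_vecMulVec_star_mul_self_eq_smul (x : d → 𝕜) :
    ∃ s : ℝ, vecMulVec x (star x) * vecMulVec x (star x) = s • vecMulVec x (star x) := by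
  obtain ⟨s, -, hs⟩ := RCLike.nonneg_iff_exists_ofReal.1 (dotProduct_star_self_nonneg x)
  refine ⟨s, ?_⟩
  rw [vecMulVec_mul_vecMulVec, ← hs, vecMulVec_smul, RCLike.real_smul_eq_coe_smul (K := 𝕜)]

lemma le_of_re_trace_mul_vecMulVec_le (hA : A.IsHermitian) (hB : B.IsHermitian)
    (h : ∀ x : d → 𝕜, RCLike.re (A * vecMulVec x (star x)).trace ≤
      RCLike.re (B * vecMulVec x (star x)).trace) : A ≤ B := by
  refine .of_dotProduct_mulVec_nonneg (hB.sub hA) fun x => RCLike.nonneg_iff.2 ⟨?_, ?_⟩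
  · simpa only [sub_mulVec, dotProduct_sub, map_sub, sub_nonneg, trace_mul_vecMulVec_star] using h x
  · exact (hB.sub hA).im_star_dotProduct_mulVec_self x

-- `Z - A = (1 - X)ᴴ * Z * (1 - X)`.
lemma le_of_mul_eq_of_mul_eq_self (hA : A.IsHermitian) (hZ : Z.PosSemidef)
    (hZX : Z * X = A) (hAX : A * X = A) : A ≤ Z := by
  classical
  have hXZ : Xᴴ * Z = A := by simpa [hA.eq, hZ.isHermitian.eq] using congrArg conjTranspose hZX
  have hconj := hZ.conjTranspose_mul_mul_same (1 - X)
  rwa [conjTranspose_sub, conjTranspose_one, Matrix.sub_mul, Matrix.one_mul, hXZ, Matrix.mul_sub,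
    Matrix.mul_one, Matrix.sub_mul, hZX, hAX, sub_self, sub_zero] at hconj

lemma le_of_mul_eq_mul_of_rank_eq (hA : A.IsHermitian) (hZ : Z.PosDef) (hZP : Z * P = A * P)
    (hrank : P.rank = A.rank) : A ≤ Z := by
  classical
  have hAP : (A * P).rank = A.rank := by
    rw [← hZP, rank_mul_eq_right_of_isUnit_det Z P ((isUnit_iff_isUnit_det Z).1 hZ.isUnit), hrank]
  obtain ⟨Y, hY⟩ := exists_mul_mul_eq_of_rank_mul_eq hAP
  refine le_of_mul_eq_of_mul_eq_self (X := P * Y) hA hZ.posSemidef ?_ ?_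
  · rw [← Matrix.mul_assoc, hZP, hY]
  · rw [← Matrix.mul_assoc, hY]

lemma exists_mulVec_ne_zero_of_iSup_range_eq_top {A : ι → Matrix d d 𝕜}
    (hA : ∀ i, (A i).IsHermitian) (hspan : ⨆ i, LinearMap.range (A i).mulVecLin = ⊤)
    {x : d → 𝕜} (hx : x ≠ 0) : ∃ i, A i *ᵥ x ≠ 0 := by
  by_contra! hzero
  have hle : ⨆ i, LinearMap.range (A i).mulVecLin ≤
      LinearMap.ker (dotProductBilin 𝕜 𝕜 (star x)) := by
    refine iSup_le fun i => ?_
    rintro _ ⟨y, rfl⟩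
    change star x ⬝ᵥ (A i *ᵥ y) = 0
    rw [dotProduct_mulVec, ← (hA i).eq, ← star_mulVec, hzero i, star_zero, zero_dotProduct]
  have hself : star x ⬝ᵥ x = 0 := hle (hspan ▸ Submodule.mem_top)
  exact hx (dotProduct_star_self_eq_zero.1 hself)

lemma posDef_of_forall_le {A : ι → Matrix d d 𝕜} (hA : ∀ i, (A i).PosSemidef)
    (hspan : ⨆ i, LinearMap.range (A i).mulVecLin = ⊤) (hZ : Z.IsHermitian)
    (hAZ : ∀ i, A i ≤ Z) : Z.PosDef := by
  refine .of_dotProduct_mulVec_pos hZ fun x hx => ?_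
  obtain ⟨i, hi⟩ :=
    exists_mulVec_ne_zero_of_iSup_range_eq_top (fun i => (hA i).isHermitian) hspan hx
  calc 0 < star x ⬝ᵥ (A i *ᵥ x) :=
        ((hA i).dotProduct_mulVec_nonneg x).lt_of_ne'
          (mt ((hA i).dotProduct_mulVec_zero_iff x).1 hi)
    _ ≤ star x ⬝ᵥ (Z *ᵥ x) := by
        simpa [sub_mulVec, dotProduct_sub] using
          (le_iff.1 (hAZ i)).dotProduct_mulVec_nonneg x

end PosSemidef

section Optimality

variable {𝕜 ι d : Type*} [RCLike 𝕜] [Fintype ι] [Fintype d]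

/-- The POVMs with outcomes in `ι` over the real or complex matrices indexed by `d`, as a set, so
that optimality is `IsMaxOn`. -/
def povms (𝕜 ι d : Type*) [RCLike 𝕜] [Fintype ι] [Fintype d] [DecidableEq d] :
    Set (ι → Matrix d d 𝕜) :=
  {E | (∀ i, (E i).PosSemidef) ∧ ∑ i, E i = 1}

/-- The success probability of `E` for the unnormalised states `A i` (`pᵢρᵢ` for an ensemble
`(p, ρ)`). -/
def score (A E : ι → Matrix d d 𝕜) : ℝ :=
  RCLike.re (∑ i, A i * E i).trace

lemma score_eq_sum (A E : ι → Matrix d d 𝕜) :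
    score A E = ∑ i, RCLike.re (A i * E i).trace := by
  rw [score, trace_sum, map_sum]

open scoped MatrixOrder

variable [DecidableEq d] {A E P : ι → Matrix d d 𝕜} {H X : Matrix d d 𝕜}

section Duality

lemma sum_trace_sub_mul_eq (A : ι → Matrix d d 𝕜) (H : Matrix d d 𝕜) (hE : E ∈ povms 𝕜 ι d) :
    ∑ i, ((H - A i) * E i).trace = H.trace - (∑ i, A i * E i).trace := by
  rw [← trace_sum, ← trace_sub]
  simp only [Matrix.sub_mul, Finset.sum_sub_distrib, ← Finset.mul_sum, hE.2, Matrix.mul_one]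

lemma score_le_re_trace_of_forall_le (hH : ∀ i, A i ≤ H) (hE : E ∈ povms 𝕜 ι d) :
    score A E ≤ RCLike.re H.trace := by
  have hnonneg : 0 ≤ ∑ i, ((H - A i) * E i).trace :=
    Finset.sum_nonneg fun i _ => trace_mul_nonneg_of_posSemidef (le_iff.1 (hH i)) (hE.1 i)
  rw [sum_trace_sub_mul_eq A H hE] at hnonneg
  simpa [score] using (RCLike.nonneg_iff.1 hnonneg).1

lemma mul_eq_mul_of_score_eq_re_trace (hH : ∀ i, A i ≤ H) (hP : P ∈ povms 𝕜 ι d)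
    (h : score A P = RCLike.re H.trace) (k : ι) : H * P k = A k * P k := by
  have hnonneg (i : ι) : 0 ≤ ((H - A i) * P i).trace :=
    trace_mul_nonneg_of_posSemidef (le_iff.1 (hH i)) (hP.1 i)
  have hsum : ∑ i, ((H - A i) * P i).trace = 0 := by
    refine RCLike.ext ?_ ?_
    · rw [sum_trace_sub_mul_eq A H hP, map_sub, ← h, score, sub_self, map_zero]
    · rw [(RCLike.nonneg_iff.1 (Finset.sum_nonneg fun i _ => hnonneg i)).2, map_zero]
  have hk : ((H - A k) * P k).trace = 0 :=
    (Finset.sum_eq_zero_iff_of_nonneg fun i _ => hnonneg i).1 hsum k (Finset.mem_univ k)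
  rw [← sub_eq_zero, ← Matrix.sub_mul]
  exact mul_eq_zero_of_trace_mul_eq_zero (le_iff.1 (hH k)) (hP.1 k) hk

end Duality

section FirstOrder

/-- The POVM obtained from `P` by applying the effect `T` on both sides and assigning the lost
weight `1 - T * T` to the outcome `k`; with `T = 1 - ε • X` it is the perturbation of `P` along
which optimality is differentiated. -/
def sandwich [DecidableEq ι] (P : ι → Matrix d d 𝕜) (k : ι) (T : Matrix d d 𝕜) (i : ι) :
    Matrix d d 𝕜 :=
  T * P i * T + (Pi.single k (1 - T * T) : ι → Matrix d d 𝕜) i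

lemma sandwich_mem_povms [DecidableEq ι] (hP : P ∈ povms 𝕜 ι d) (k : ι) {T : Matrix d d 𝕜}
    (hT : T.IsHermitian) (hT1 : T * T ≤ 1) : sandwich P k T ∈ povms 𝕜 ι d := by
  refine ⟨fun i => .add ?_ ?_, ?_⟩
  · simpa only [hT.eq] using (hP.1 i).mul_mul_conjTranspose_same T
  · obtain rfl | hik := eq_or_ne i k
    · rw [Pi.single_eq_same]
      exact hT1
    · rw [Pi.single_eq_of_ne hik]
      exact .zero
  · simp only [sandwich, Finset.sum_add_distrib, ← Finset.sum_mul, ← Finset.mul_sum, hP.2,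
      Finset.sum_pi_single', Finset.mem_univ, if_true, Matrix.mul_one, add_sub_cancel]

lemma score_sandwich [DecidableEq ι] (A P : ι → Matrix d d 𝕜) (k : ι) (T : Matrix d d 𝕜) :
    score A (sandwich P k T) =
      score A (fun i => T * P i * T) + RCLike.re (A k * (1 - T * T)).trace := by
  have hsingle : ∑ i, A i * (Pi.single k (1 - T * T) : ι → Matrix d d 𝕜) i =
      A k * (1 - T * T) :=
    (Fintype.sum_eq_single k fun i hik => by rw [Pi.single_eq_of_ne hik, Matrix.mul_zero]).trans
      (by rw [Pi.single_eq_same])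
  simp only [score, sandwich, Matrix.mul_add, Finset.sum_add_distrib, trace_add, map_add, hsingle]

lemma score_one_sub_smul_mul_mul (hA : ∀ i, (A i).IsHermitian) (hP : ∀ i, (P i).IsHermitian)
    (hX : X.IsHermitian) (ε : ℝ) :
    score A (fun i => (1 - ε • X) * P i * (1 - ε • X)) = score A P -
      2 * ε * RCLike.re ((∑ i, A i * P i) * X).trace + ε ^ 2 * score A (fun i => X * P i * X) := by
  have hterm (i : ι) : RCLike.re (A i * ((1 - ε • X) * P i * (1 - ε • X))).trace =
      RCLike.re (A i * P i).trace - 2 * ε * RCLike.re (A i * P i * X).trace +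
        ε ^ 2 * RCLike.re (A i * (X * P i * X)).trace := by
    have hexpand : A i * ((1 - ε • X) * P i * (1 - ε • X)) =
        A i * P i - ε • (A i * X * P i) - ε • (A i * P i * X) + ε ^ 2 • (A i * (X * P i * X)) := by
      simp only [Matrix.sub_mul, Matrix.mul_sub, Matrix.one_mul, Matrix.mul_one, smul_mul_assoc,
        mul_smul_comm, Matrix.mul_assoc]
      module
    rw [hexpand]
    simp only [trace_add, trace_sub, trace_smul, map_add, map_sub, RCLike.smul_re,
      re_trace_mul_mul_right_comm (hA i) (hP i) hX]
    ring
  simp only [score_eq_sum, hterm, Finset.sum_add_distrib, Finset.sum_sub_distrib, ← Finset.mul_sum,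
    Finset.sum_mul, trace_sum, map_sum]

lemma score_sandwich_one_sub_smul [DecidableEq ι] (hA : ∀ i, (A i).IsHermitian)
    (hP : ∀ i, (P i).IsHermitian) (hX : X.IsHermitian) (k : ι) (ε : ℝ) :
    score A (sandwich P k (1 - ε • X)) = score A P +
      (ε * (2 * (RCLike.re (A k * X).trace - RCLike.re ((∑ i, A i * P i) * X).trace)) +
        ε ^ 2 * (score A (fun i => X * P i * X) - RCLike.re (A k * (X * X)).trace)) := by
  rw [score_sandwich, score_one_sub_smul_mul_mul hA hP hX, one_sub_smul_mul_self, sub_sub_cancel]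
  simp only [Matrix.mul_sub, mul_smul_comm, trace_sub, trace_smul, map_sub, RCLike.smul_re]
  ring

lemma eventually_one_sub_smul_mul_self_le_one (hX : X.PosSemidef) {s : ℝ} (hXX : X * X = s • X) :
    ∀ᶠ ε : ℝ in 𝓝[>] 0, (1 - ε • X) * (1 - ε • X) ≤ 1 := by
  have hlim : Tendsto (fun ε : ℝ => 2 - ε * s) (𝓝[>] 0) (𝓝 2) :=
    tendsto_nhdsWithin_of_tendsto_nhds (Continuous.tendsto' (by fun_prop) _ _ (by simp))
  filter_upwards [hlim.eventually_const_lt two_pos, self_mem_nhdsWithin] with ε hs hε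
  have hscale : (2 * ε) • X - ε ^ 2 • (X * X) = (ε * (2 - ε * s)) • X := by
    rw [hXX]
    module
  rw [one_sub_smul_mul_self, sub_le_self_iff, hscale, nonneg_iff_posSemidef]
  exact hX.smul (mul_pos hε hs).le

lemma re_trace_mul_le_of_isMaxOn (hA : ∀ i, (A i).IsHermitian) (hP : P ∈ povms 𝕜 ι d)
    (hmax : IsMaxOn (score A) (povms 𝕜 ι d) P) (hX : X.PosSemidef) {s : ℝ} (hXX : X * X = s • X)
    (k : ι) : RCLike.re (A k * X).trace ≤ RCLike.re ((∑ i, A i * P i) * X).trace := by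
  classical
  suffices hslope :
      2 * (RCLike.re (A k * X).trace - RCLike.re ((∑ i, A i * P i) * X).trace) ≤ 0 by linarith
  refine nonpos_of_eventually_mul_add_sq_mul_nonpos
    (C := score A (fun i => X * P i * X) - RCLike.re (A k * (X * X)).trace) ?_
  filter_upwards [eventually_one_sub_smul_mul_self_le_one hX hXX] with ε hε
  have hHerm : (1 - ε • X).IsHermitian :=
    isHermitian_one.sub (hX.isHermitian.smul (IsSelfAdjoint.all ε))
  have hle := hmax (sandwich_mem_povms hP k hHerm hε)
  rw [Set.mem_ofPred_eq,
    score_sandwich_one_sub_smul hA (fun i => (hP.1 i).isHermitian) hX.isHermitian] at hle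
  linarith

end FirstOrder

section Lagrange

lemma le_selfAdjointPart_sum_mul_of_isMaxOn (hA : ∀ i, (A i).IsHermitian)
    (hP : P ∈ povms 𝕜 ι d) (hmax : IsMaxOn (score A) (povms 𝕜 ι d) P) (k : ι) :
    A k ≤ (selfAdjointPart ℝ (∑ i, A i * P i) : Matrix d d 𝕜) := by
  refine le_of_re_trace_mul_vecMulVec_le (hA k) (selfAdjointPart ℝ (∑ i, A i * P i)).2 fun x => ?_
  have hx : (vecMulVec x (star x)).PosSemidef := posSemidef_vecMulVec_self_star x
  obtain ⟨s, hs⟩ := exists_vecMulVec_star_mul_self_eq_smul x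
  rw [re_trace_selfAdjointPart_mul _ hx.isHermitian]
  exact re_trace_mul_le_of_isMaxOn hA hP hmax hx hs k

lemma selfAdjointPart_sum_mul_mul_eq_of_isMaxOn (hA : ∀ i, (A i).IsHermitian)
    (hP : P ∈ povms 𝕜 ι d) (hmax : IsMaxOn (score A) (povms 𝕜 ι d) P) (k : ι) :
    (selfAdjointPart ℝ (∑ i, A i * P i) : Matrix d d 𝕜) * P k = A k * P k := by
  refine mul_eq_mul_of_score_eq_re_trace (le_selfAdjointPart_sum_mul_of_isMaxOn hA hP hmax) hP ?_ k
  simpa only [Matrix.mul_one, score] using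
    (re_trace_selfAdjointPart_mul (∑ i, A i * P i) isHermitian_one).symm

lemma selfAdjointPart_sum_mul_eq_of_isMaxOn (hA : ∀ i, (A i).IsHermitian)
    (hP : P ∈ povms 𝕜 ι d) (hmax : IsMaxOn (score A) (povms 𝕜 ι d) P) :
    (selfAdjointPart ℝ (∑ i, A i * P i) : Matrix d d 𝕜) = ∑ i, A i * P i := by
  calc (selfAdjointPart ℝ (∑ i, A i * P i) : Matrix d d 𝕜)
      = ∑ k, (selfAdjointPart ℝ (∑ i, A i * P i) : Matrix d d 𝕜) * P k := by
        rw [← Finset.mul_sum, hP.2, Matrix.mul_one]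
    _ = ∑ k, A k * P k :=
        Finset.sum_congr rfl fun k _ => selfAdjointPart_sum_mul_mul_eq_of_isMaxOn hA hP hmax k

theorem isHermitian_and_le_and_mul_eq_of_isMaxOn (hA : ∀ i, (A i).IsHermitian)
    (hP : P ∈ povms 𝕜 ι d) (hmax : IsMaxOn (score A) (povms 𝕜 ι d) P) :
    (∑ i, A i * P i).IsHermitian ∧ (∀ k, A k ≤ ∑ i, A i * P i) ∧
      ∀ k, (∑ i, A i * P i) * P k = A k * P k := by
  rw [← selfAdjointPart_sum_mul_eq_of_isMaxOn hA hP hmax]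
  exact ⟨(selfAdjointPart ℝ _).2, le_selfAdjointPart_sum_mul_of_isMaxOn hA hP hmax,
    selfAdjointPart_sum_mul_mul_eq_of_isMaxOn hA hP hmax⟩

end Lagrange

theorem isMaxOn_score_of_forall_le (hle : ∀ k, A k ≤ ∑ i, A i * P i) :
    IsMaxOn (score A) (povms 𝕜 ι d) P :=
  fun _ hE => score_le_re_trace_of_forall_le hle hE

end Optimality

theorem stmt_9_general {𝕜 ι d : Type*} [RCLike 𝕜] [Fintype ι] [Fintype d] [DecidableEq d]
    {A P : ι → Matrix d d 𝕜} (hA : ∀ i, (A i).PosSemidef)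
    (hrank : ∑ i, (A i).rank ≤ Fintype.card d)
    (hspan : ⨆ i, LinearMap.range (A i).mulVecLin = ⊤) (hP : P ∈ povms 𝕜 ι d) :
    IsMaxOn (score A) (povms 𝕜 ι d) P ↔
      CompleteOrthogonalIdempotents P ∧ (∑ i, A i * P i).PosDef := by
  have hAherm (i : ι) : (A i).IsHermitian := (hA i).isHermitian
  constructor
  · intro hmax
    obtain ⟨hZherm, hle, hZP⟩ := isHermitian_and_le_and_mul_eq_of_isMaxOn hAherm hP hmax
    have hZ : (∑ i, A i * P i).PosDef := posDef_of_forall_le hA hspan hZherm hle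
    have hrankP (i : ι) : (P i).rank = (A i).rank :=
      rank_eq_of_mul_eq_mul hP.2 hrank hZ.isUnit hZP i
    exact ⟨completeOrthogonalIdempotents_of_sum_rank_le hP.2 (by simpa only [hrankP]), hZ⟩
  · rintro ⟨hidem, hZ⟩
    have hZP := sum_mul_mul_of_orthogonalIdempotents hidem.toOrthogonalIdempotents A
    exact isMaxOn_score_of_forall_le fun k => le_of_mul_eq_mul_of_rank_eq (hAherm k) hZ (hZP k)
      (rank_eq_of_mul_eq_mul hP.2 hrank hZ.isUnit hZP k)

section Ensemble

variable {ι : Type} [Fintype ι] {n : ℕ} {p : ι → ℝ} {ρ P : ι → Matrix (Fin n) (Fin n) ℂ}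

/-- The unnormalised states `pᵢρᵢ` of the ensemble `(p, ρ)`. -/
def weightedState (p : ι → ℝ) (ρ : ι → Matrix (Fin n) (Fin n) ℂ) (i : ι) :
    Matrix (Fin n) (Fin n) ℂ :=
  (p i : ℂ) • ρ i

lemma sum_weightedState_mul (p : ι → ℝ) (ρ E : ι → Matrix (Fin n) (Fin n) ℂ) :
    ∑ i, weightedState p ρ i * E i = ∑ i, (p i : ℂ) • (ρ i * E i) := by
  simp only [weightedState, smul_mul_assoc]

lemma score_weightedState (p : ι → ℝ) (ρ E : ι → Matrix (Fin n) (Fin n) ℂ) :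
    score (weightedState p ρ) E = succProb p ρ E := by
  simp only [score, sum_weightedState_mul, trace_sum, trace_smul, map_sum, smul_eq_mul,
    RCLike.re_eq_complex_re, Complex.re_ofReal_mul, succProb]

lemma isOptimal_iff_isMaxOn (hP : IsPOVM P) :
    IsOptimal p ρ P ↔ IsMaxOn (score (weightedState p ρ)) (povms ℂ ι (Fin n)) P := by
  simp only [IsOptimal, hP, true_and, isMaxOn_iff, score_weightedState]
  rfl

lemma isProjectiveMeasurement_iff (hP : IsPOVM P) :
    IsProjectiveMeasurement P ↔ CompleteOrthogonalIdempotents P :=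
  ⟨fun h => ⟨⟨h.2.1, fun i j => h.1 i j⟩, h.2.2.2⟩,
    fun h => ⟨fun _ _ hij => h.ortho hij, h.idem, fun i => (hP.1 i).isHermitian, h.complete⟩⟩

lemma IsLIEnsemble.posSemidef_weightedState (h : IsLIEnsemble p ρ) (i : ι) :
    (weightedState p ρ i).PosSemidef :=
  (h.1.2.2.1 i).smul (Complex.zero_le_real.2 (h.1.1 i).le)

lemma IsLIEnsemble.ofReal_ne_zero (h : IsLIEnsemble p ρ) (i : ι) : (p i : ℂ) ≠ 0 :=
  Complex.ofReal_ne_zero.2 (h.1.1 i).ne'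

lemma IsLIEnsemble.sum_rank_weightedState (h : IsLIEnsemble p ρ) :
    ∑ i, (weightedState p ρ i).rank = Fintype.card (Fin n) := by
  have hrank (i : ι) : (weightedState p ρ i).rank = (ρ i).rank :=
    rank_smul_of_mem_nonZeroDivisors _ (mem_nonZeroDivisors_of_ne_zero (h.ofReal_ne_zero i))
  simp only [hrank, h.2.1, Fintype.card_fin]

lemma IsLIEnsemble.iSup_range_weightedState (h : IsLIEnsemble p ρ) :
    ⨆ i, LinearMap.range (weightedState p ρ i).mulVecLin = ⊤ := by
  have hrange (i : ι) :
      LinearMap.range (weightedState p ρ i).mulVecLin = LinearMap.range (ρ i).mulVecLin := by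
    have hsmul : (weightedState p ρ i).mulVecLin = (p i : ℂ) • (ρ i).mulVecLin :=
      LinearMap.ext fun x => smul_mulVec (p i : ℂ) (ρ i) x
    rw [hsmul, LinearMap.range_smul _ _ (h.ofReal_ne_zero i)]
  simp only [hrange, h.2.2]

end Ensemble

/-- For an LI ensemble, a POVM is optimal iff it is a projective measurement and
`Z = ∑ pᵢρᵢΠᵢ` is positive definite. -/
theorem stmt_9 {m n : ℕ} (p : Fin m → ℝ) (ρ : Fin m → Matrix (Fin n) (Fin n) ℂ)
    (hens : IsLIEnsemble p ρ)
    (P : Fin m → Matrix (Fin n) (Fin n) ℂ) (hP : IsPOVM P) :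
    IsOptimal p ρ P ↔
      (IsProjectiveMeasurement P ∧ (∑ i, (p i : ℂ) • (ρ i * P i)).PosDef) := by
  rw [isOptimal_iff_isMaxOn hP, isProjectiveMeasurement_iff hP, ← sum_weightedState_mul]
  exact stmt_9_general hens.posSemidef_weightedState hens.sum_rank_weightedState.le
    hens.iSup_range_weightedState hP
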